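/- Under the null hypothesis, for any c ∈ [0,1], letting q_c := P(M_n^+ ≤ c), the two-sided statistic satisfies 2q_c - q_c² ≤ P(M_n ≤ c) ≤ 2q_c. -/

import Mathlib

open MeasureTheory Filter Set

noncomputable section

/-- Density of the Beta(a,b) distribution on [0,1]. -/
def betaPDF (a b x : ℝ) : ℝ :=
  x ^ (a - 1) * (1 - x) ^ (b - 1) / (Real.Gamma a * Real.Gamma b / Real.Gamma (a + b))

/-- Regularized incomplete beta function `I_x(a,b) = P(Beta(a,b) < x)`. -/
def regIncBeta (a b x : ℝ) : ℝ := ∫ t in Set.Ioc (0:ℝ) x, betaPDF a b t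

/-- The `i`-th order statistic (0-based) of the sample `u`. -/
def orderStat {n : ℕ} (u : Fin n → ℝ) (i : Fin n) : ℝ := u (Tuple.sort u i)

/-- `p_{(i)} = P(Beta(i, n-i+1) < u_{(i)})` (with 1-based index `i = (i : Fin n) + 1`). -/
def pOrd {n : ℕ} (u : Fin n → ℝ) (i : Fin n) : ℝ :=
  regIncBeta ((i : ℕ) + 1 : ℝ) ((n : ℝ) - (i : ℕ)) (orderStat u i)

/-- One-sided exact Berk-Jones statistic `M_n^+`. -/
def MnPlus {n : ℕ} (u : Fin n → ℝ) : ℝ := ⨅ i, pOrd u i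

/-- One-sided exact Berk-Jones statistic `M_n^-`. -/
def MnMinus {n : ℕ} (u : Fin n → ℝ) : ℝ := ⨅ i, (1 - pOrd u i)

/-- Two-sided exact Berk-Jones statistic `M_n`. -/
def Mn {n : ℕ} (u : Fin n → ℝ) : ℝ := min (MnPlus u) (MnMinus u)

/-- Joint law of `n` i.i.d. `U[0,1]` random variables (the null hypothesis). -/
def nullMeasure (n : ℕ) : Measure (Fin n → ℝ) :=
  Measure.pi fun _ => MeasureTheory.volume.restrict (Set.Icc (0:ℝ) 1)

end


lemma bj_integrable_of_bdd {α : Type*} [MeasurableSpace α] (μ : Measure α) [IsProbabilityMeasure μ]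
    {f : α → ℝ} (hf : Measurable f) (hb : ∀ x, |f x| ≤ 1) : Integrable f μ :=
  Integrable.of_bound hf.aestronglyMeasurable 1 (Eventually.of_forall hb)

lemma bj_mul_bdd {a b : ℝ} (ha : |a| ≤ 1) (hb : |b| ≤ 1) : |a * b| ≤ 1 := by
  rw [abs_mul]
  exact mul_le_one₀ ha (abs_nonneg _) hb

lemma bj_abs_integral {α : Type*} [MeasurableSpace α] (μ : Measure α) [IsProbabilityMeasure μ]
    {f : α → ℝ} (hb : ∀ x, |f x| ≤ 1) : |∫ x, f x ∂μ| ≤ 1 := by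
  have := norm_integral_le_of_norm_le_const (μ := μ) (f := f) (C := 1) (Eventually.of_forall hb)
  simpa using this

lemma bj_cheb (μ : Measure ℝ) [IsProbabilityMeasure μ] (f g : ℝ → ℝ) (hf : Measurable f)
    (hg : Measurable g) (mf : Monotone f) (mg : Monotone g) (bf : ∀ x, |f x| ≤ 1)
    (bg : ∀ x, |g x| ≤ 1) : (∫ x, f x ∂μ) * (∫ x, g x ∂μ) ≤ ∫ x, f x * g x ∂μ := by
  have If := bj_integrable_of_bdd μ hf bf
  have Ig := bj_integrable_of_bdd μ hg bg
  have Ifg := bj_integrable_of_bdd μ (hf.mul hg) (fun x => bj_mul_bdd (bf x) (bg x))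
  change Integrable (fun x => f x * g x) μ at Ifg
  have h1 : ∀ y, 0 ≤ (∫ x, f x * g x ∂μ) - g y * (∫ x, f x ∂μ) - f y * (∫ x, g x ∂μ)
      + f y * g y := by
    intro y
    have h : 0 ≤ ∫ x, (f x * g x - g y * f x - f y * g x + f y * g y) ∂μ := by
      apply integral_nonneg
      intro x
      show 0 ≤ f x * g x - g y * f x - f y * g x + f y * g y
      rcases le_total x y with h | h
      · nlinarith [mf h, mg h]
      · nlinarith [mf h, mg h]
    have j1 : Integrable (fun x => f x * g x - g y * f x) μ := Ifg.sub (If.const_mul (g y))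
    have j2 : Integrable (fun x => f x * g x - g y * f x - f y * g x) μ :=
      j1.sub (Ig.const_mul (f y))
    rw [integral_add j2 (integrable_const _), integral_sub j1 (Ig.const_mul (f y)),
      integral_sub Ifg (If.const_mul (g y)), integral_const_mul, integral_const_mul] at h
    simpa using h
  have h2 : 0 ≤ ∫ y, ((∫ x, f x * g x ∂μ) - g y * (∫ x, f x ∂μ) - f y * (∫ x, g x ∂μ)
      + f y * g y) ∂μ := integral_nonneg h1
  have i1 := (integrable_const (μ := μ) (∫ x, f x * g x ∂μ))
  have i2 := Ig.mul_const (∫ x, f x ∂μ)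
  have i3 := If.mul_const (∫ x, g x ∂μ)
  have i4 : Integrable (fun y => (∫ x, f x * g x ∂μ) - g y * (∫ x, f x ∂μ)) μ := i1.sub i2
  have i5 : Integrable (fun y => (∫ x, f x * g x ∂μ) - g y * (∫ x, f x ∂μ)
      - f y * (∫ x, g x ∂μ)) μ := i4.sub i3
  rw [integral_add i5 Ifg, integral_sub i4 i3, integral_sub i1 i2,
    integral_mul_const, integral_mul_const] at h2
  simp at h2
  nlinarith

lemma bj_integral_succ (μ : Measure ℝ) [IsProbabilityMeasure μ] (n : ℕ)
    (f : (Fin (n+1) → ℝ) → ℝ) (hf : Measurable f) (bf : ∀ x, |f x| ≤ 1) :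
    ∫ u, f u ∂(Measure.pi fun _ : Fin (n+1) => μ) =
      ∫ x, ∫ y, f (Fin.cons x y) ∂(Measure.pi fun _ : Fin n => μ) ∂μ := by
  have mp := (measurePreserving_piFinSuccAbove (fun _ : Fin (n+1) => μ) 0).symm
  rw [← mp.integral_comp', integral_prod]
  · simp [MeasurableEquiv.piFinSuccAbove_symm_apply, Fin.insertNthEquiv]
  · exact bj_integrable_of_bdd _ (hf.comp (MeasurableEquiv.measurable _)) (fun x => bf _)

lemma bj_meas_cons (n : ℕ) :
    Measurable (fun p : ℝ × (Fin n → ℝ) => (Fin.cons p.1 p.2 : Fin (n+1) → ℝ)) := by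
  rw [measurable_pi_iff]
  intro i
  refine Fin.cases ?_ (fun j => ?_) i
  · simpa using measurable_fst
  · simp only [Fin.cons_succ]
    exact (measurable_pi_apply j).comp measurable_snd

lemma bj_harris (μ : Measure ℝ) [IsProbabilityMeasure μ] : ∀ (n : ℕ) (f g : (Fin n → ℝ) → ℝ),
    Measurable f → Measurable g → Monotone f → Monotone g → (∀ x, |f x| ≤ 1) →
    (∀ x, |g x| ≤ 1) →
    (∫ x, f x ∂(Measure.pi fun _ => μ)) * (∫ x, g x ∂(Measure.pi fun _ => μ)) ≤
      ∫ x, f x * g x ∂(Measure.pi fun _ => μ) := by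
  intro n
  induction n with
  | zero =>
    intro f g _ _ _ _ _ _
    have h1 : ∀ x, f x = f default := fun x => by rw [Subsingleton.elim x default]
    have h2 : ∀ x, g x = g default := fun x => by rw [Subsingleton.elim x default]
    simp only [h1, h2]
    simp
  | succ n ih =>
    intro f g hf hg mf mg bf bg
    have mc := bj_meas_cons n
    have fm : ∀ (h : (Fin (n+1) → ℝ) → ℝ), Measurable h → Measurable
        (fun x : ℝ => ∫ y, h (Fin.cons x y) ∂(Measure.pi fun _ : Fin n => μ)) := by
      intro h hh
      exact ((hh.comp mc).stronglyMeasurable.integral_prod_right').measurable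
    have cm : ∀ x, Measurable (fun y : Fin n → ℝ => (Fin.cons x y : Fin (n+1) → ℝ)) :=
      fun x => mc.comp measurable_prodMk_left
    have mono : ∀ (h : (Fin (n+1) → ℝ) → ℝ), Measurable h → Monotone h → (∀ x, |h x| ≤ 1) →
        Monotone (fun x : ℝ => ∫ y, h (Fin.cons x y) ∂(Measure.pi fun _ : Fin n => μ)) := by
      intro h hh hm hb x x' hx
      refine integral_mono (bj_integrable_of_bdd _ (hh.comp (cm x)) (fun y => hb _))
        (bj_integrable_of_bdd _ (hh.comp (cm x')) (fun y => hb _)) ?_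
      intro y
      exact hm (Fin.cons_le_cons.2 ⟨hx, le_rfl⟩)
    have bfg : ∀ x, |f x * g x| ≤ 1 := fun x => bj_mul_bdd (bf x) (bg x)
    rw [bj_integral_succ μ n f hf bf, bj_integral_succ μ n g hg bg,
      bj_integral_succ μ n (fun u => f u * g u) (hf.mul hg) bfg]
    refine (bj_cheb μ _ _ (fm f hf) (fm g hg) (mono f hf mf bf) (mono g hg mg bg)
      (fun x => bj_abs_integral _ fun y => bf _) (fun x => bj_abs_integral _ fun y => bg _)).trans ?_
    refine integral_mono
      (bj_integrable_of_bdd _ ((fm f hf).mul (fm g hg)) (fun x => bj_mul_bdd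
        (bj_abs_integral _ fun y => bf _) (bj_abs_integral _ fun y => bg _)))
      (bj_integrable_of_bdd _ (fm (fun u => f u * g u) (hf.mul hg))
        (fun x => bj_abs_integral _ fun y => bfg _)) ?_
    intro x
    refine ih _ _ (hf.comp (cm x)) (hg.comp (cm x)) ?_ ?_ (fun y => bf _) (fun y => bg _)
    · intro y y' h
      exact mf (Fin.cons_le_cons.2 ⟨le_rfl, h⟩)
    · intro y y' h
      exact mg (Fin.cons_le_cons.2 ⟨le_rfl, h⟩)

lemma bj_harris_set (μ : Measure ℝ) [IsProbabilityMeasure μ] (n : ℕ) (A B : Set (Fin n → ℝ))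
    (hA : MeasurableSet A) (hB : MeasurableSet B) (uA : IsUpperSet A) (uB : IsUpperSet B) :
    (Measure.pi fun _ => μ).real A * (Measure.pi fun _ => μ).real B ≤
      (Measure.pi fun _ => μ).real (A ∩ B) := by
  have mono : ∀ A : Set (Fin n → ℝ), IsUpperSet A → Monotone (A.indicator (fun _ => (1:ℝ))) := by
    intro A uA x y h
    by_cases hx : x ∈ A
    · simp [hx, uA h hx]
    · simp only [hx, not_false_eq_true, indicator_of_notMem]
      exact indicator_nonneg (fun _ _ => zero_le_one) _
  have bd : ∀ (A : Set (Fin n → ℝ)) x, |A.indicator (fun _ => (1:ℝ)) x| ≤ 1 := by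
    intro A x
    by_cases hx : x ∈ A <;> simp [hx]
  have := bj_harris μ n (A.indicator fun _ => 1) (B.indicator fun _ => 1)
    (measurable_const.indicator hA) (measurable_const.indicator hB) (mono A uA) (mono B uB)
    (bd A) (bd B)
  have e : ∀ x, A.indicator (fun _ => (1:ℝ)) x * B.indicator (fun _ => (1:ℝ)) x =
      (A ∩ B).indicator (fun _ => (1:ℝ)) x := by
    intro x
    by_cases h1 : x ∈ A <;> by_cases h2 : x ∈ B <;> simp [h1, h2]
  simp only [e] at this
  rw [integral_indicator_const _ hA, integral_indicator_const _ hB,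
    integral_indicator_const _ (hA.inter hB)] at this
  simpa using this

lemma bj_orderStat_mono {n : ℕ} (i : Fin n) : Monotone (fun u : Fin n → ℝ => orderStat u i) := by
  intro u v h
  have key : ∀ (w : Fin n → ℝ) (t : ℝ), (i : ℕ) < (Finset.univ.filter fun j => w j ≤ t).card ↔
      orderStat w i ≤ t := by
    intro w t
    rw [show orderStat w i = (w ∘ Tuple.sort w) i from rfl,
      ← Tuple.lt_card_le_iff_apply_le_of_monotone (Tuple.monotone_sort w)]
    have : (Finset.univ.filter fun j => w j ≤ t) = Finset.map (Tuple.sort w).toEmbedding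
        (Finset.univ.filter fun j => (w ∘ Tuple.sort w) j ≤ t) := by
      ext j
      simp only [Finset.mem_filter, Finset.mem_univ, true_and, Finset.mem_map, Function.comp,
        Equiv.coe_toEmbedding]
      constructor
      · intro hj
        exact ⟨(Tuple.sort w).symm j, by simpa using hj, by simp⟩
      · rintro ⟨k, hk, rfl⟩
        exact hk
    rw [this, Finset.card_map]
  show orderStat u i ≤ orderStat v i
  rw [← key]
  refine lt_of_lt_of_le ((key v _).2 le_rfl) (Finset.card_le_card ?_)
  intro j
  simp only [Finset.mem_filter, Finset.mem_univ, true_and]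
  exact fun hj => (h j).trans hj

lemma bj_orderStat_meas {n : ℕ} (i : Fin n) :
    Measurable (fun u : Fin n → ℝ => orderStat u i) := by
  intro s hs
  have : (fun u : Fin n → ℝ => orderStat u i) ⁻¹' s =
      ⋃ σ : Equiv.Perm (Fin n), ({u | Monotone (u ∘ σ)} ∩ {u | u (σ i) ∈ s}) := by
    ext u
    simp only [mem_preimage, mem_iUnion, mem_inter_iff, mem_ofPred_eq]
    constructor
    · intro h
      exact ⟨Tuple.sort u, Tuple.monotone_sort u, h⟩
    · rintro ⟨σ, h1, h2⟩
      have := congrFun (Tuple.comp_sort_eq_comp_iff_monotone.2 h1) i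
      simp only [Function.comp] at this
      rw [orderStat, ← this]
      exact h2
  rw [this]
  refine MeasurableSet.iUnion fun σ => MeasurableSet.inter ?_ (measurable_pi_apply _ hs)
  simp only [Monotone, Function.comp, ofPred_forall]
  refine MeasurableSet.iInter fun a => MeasurableSet.iInter fun b => MeasurableSet.iInter fun _ => ?_
  exact measurableSet_le (measurable_pi_apply _) (measurable_pi_apply _)

lemma bj_orderStat_refl {n : ℕ} (u : Fin n → ℝ) (i : Fin n) :
    orderStat (fun j => 1 - u j) i = 1 - orderStat u i.rev := by
  have h : Monotone ((fun j => 1 - u j) ∘ (Fin.revPerm.trans (Tuple.sort u))) := by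
    intro a b hab
    have := Tuple.monotone_sort u (Fin.rev_le_rev.2 hab)
    simp only [Function.comp, Equiv.trans_apply, Fin.revPerm_apply] at *
    linarith
  have := congrFun (Tuple.comp_sort_eq_comp_iff_monotone.2 h) i
  simp only [Function.comp, Equiv.trans_apply, Fin.revPerm_apply] at this
  rw [orderStat, ← this, orderStat]

lemma bj_betaPDF_cont {a b : ℝ} (ha : 1 ≤ a) (hb : 1 ≤ b) : Continuous (betaPDF a b) := by
  unfold betaPDF
  refine ((continuous_id.rpow_const fun x => Or.inr (by linarith)).mul
    ((continuous_const.sub continuous_id).rpow_const fun x => Or.inr (by linarith))).div_const _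

lemma bj_betaPDF_nonneg {a b x : ℝ} (ha : 1 ≤ a) (hb : 1 ≤ b) (h0 : 0 ≤ x) (h1 : x ≤ 1) :
    0 ≤ betaPDF a b x := by
  have := ProbabilityTheory.beta_pos (α := a) (β := b) (by linarith) (by linarith)
  unfold betaPDF
  exact div_nonneg (mul_nonneg (Real.rpow_nonneg h0 _) (Real.rpow_nonneg (by linarith) _)) this.le

lemma bj_reg_one {a b : ℝ} (ha : 1 ≤ a) (hb : 1 ≤ b) : regIncBeta a b 1 = 1 := by
  unfold regIncBeta
  rw [integral_Ioc_eq_integral_Ioo, integral_eq_lintegral_of_nonneg_ae]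
  · have := ProbabilityTheory.lintegral_betaPDF_eq_one (α := a) (β := b)
      (by linarith) (by linarith)
    rw [ProbabilityTheory.lintegral_betaPDF] at this
    rw [ENNReal.toReal_eq_one_iff, ← this]
    congr 1
    ext x
    congr 1
    unfold betaPDF ProbabilityTheory.beta
    ring
  · exact ae_restrict_of_forall_mem measurableSet_Ioo fun x hx =>
      bj_betaPDF_nonneg ha hb hx.1.le hx.2.le
  · exact (bj_betaPDF_cont ha hb).aestronglyMeasurable

lemma bj_reg_mono {a b x y : ℝ} (ha : 1 ≤ a) (hb : 1 ≤ b) (hxy : x ≤ y)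
    (hy : y ≤ 1) : regIncBeta a b x ≤ regIncBeta a b y := by
  unfold regIncBeta
  refine setIntegral_mono_set ((bj_betaPDF_cont ha hb).integrableOn_Ioc) ?_ ?_
  · exact ae_restrict_of_forall_mem measurableSet_Ioc fun t ht =>
      bj_betaPDF_nonneg ha hb ht.1.le (ht.2.trans hy)
  · exact (Ioc_subset_Ioc_right hxy).eventuallyLE

lemma bj_reg_refl {a b x : ℝ} (ha : 1 ≤ a) (hb : 1 ≤ b) (hx : 0 ≤ x) (hx1 : x ≤ 1) :
    regIncBeta b a (1 - x) = 1 - regIncBeta a b x := by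
  have h1 := bj_reg_one ha hb
  suffices regIncBeta b a (1 - x) = regIncBeta a b 1 - regIncBeta a b x by rw [this, h1]
  unfold regIncBeta
  rw [← intervalIntegral.integral_of_le hx, ← intervalIntegral.integral_of_le zero_le_one,
    ← intervalIntegral.integral_of_le (by linarith),
    intervalIntegral.integral_interval_sub_left ((bj_betaPDF_cont ha hb).intervalIntegrable _ _)
      ((bj_betaPDF_cont ha hb).intervalIntegrable _ _)]
  have := intervalIntegral.integral_comp_sub_left (a := 0) (b := 1 - x) (betaPDF a b) 1
  simp only [sub_sub_cancel, sub_zero] at this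
  rw [← this]
  congr 1
  ext t
  unfold betaPDF
  rw [sub_sub_cancel, add_comm b a]
  ring

/-- The `i`-th p-value map, clamped to `[0,1]`. -/
noncomputable def bjF (n : ℕ) (i : Fin n) (x : ℝ) : ℝ :=
  regIncBeta ((i : ℕ) + 1 : ℝ) ((n : ℝ) - (i : ℕ)) (max 0 (min 1 x))

lemma bj_ha {n : ℕ} (i : Fin n) : (1:ℝ) ≤ (i : ℕ) + 1 := by
  have : (0:ℝ) ≤ (i : ℕ) := Nat.cast_nonneg _
  linarith

lemma bj_hb {n : ℕ} (i : Fin n) : (1:ℝ) ≤ (n : ℝ) - (i : ℕ) := by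
  have : ((i : ℕ) : ℝ) + 1 ≤ n := by exact_mod_cast i.2
  linarith

lemma bjF_mono (n : ℕ) (i : Fin n) : Monotone (bjF n i) := by
  intro x y h
  refine bj_reg_mono (bj_ha i) (bj_hb i) ?_ ?_
  · exact max_le_max le_rfl (min_le_min le_rfl h)
  · exact max_le zero_le_one (min_le_left _ _)

instance bj_unif_prob : IsProbabilityMeasure (volume.restrict (Set.Icc (0:ℝ) 1)) :=
  ⟨by simp⟩

instance bj_null_prob (n : ℕ) : IsProbabilityMeasure (nullMeasure n) := by
  unfold nullMeasure
  infer_instance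

lemma bj_ae_cube (n : ℕ) : ∀ᵐ u ∂(nullMeasure n), ∀ i, u i ∈ Icc (0:ℝ) 1 := by
  rw [ae_all_iff]
  intro i
  unfold nullMeasure
  have h : ∀ᵐ x ∂(volume.restrict (Set.Icc (0:ℝ) 1)), x ∈ Icc (0:ℝ) 1 :=
    ae_restrict_mem measurableSet_Icc
  exact (measurePreserving_eval (fun _ : Fin n => volume.restrict (Set.Icc (0:ℝ) 1))
    i).quasiMeasurePreserving.ae h

lemma bj_pOrd_eq {n : ℕ} {u : Fin n → ℝ} (hu : ∀ i, u i ∈ Icc (0:ℝ) 1) (i : Fin n) :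
    pOrd u i = bjF n i (orderStat u i) := by
  have := hu (Tuple.sort u i)
  unfold pOrd bjF
  rw [show orderStat u i = u (Tuple.sort u i) from rfl, min_eq_right this.2, max_eq_right this.1]

lemma bj_pOrd_refl {n : ℕ} {u : Fin n → ℝ} (hu : ∀ i, u i ∈ Icc (0:ℝ) 1) (i : Fin n) :
    pOrd (fun j => 1 - u j) i.rev = 1 - pOrd u i := by
  have : orderStat u i ∈ Icc (0:ℝ) 1 := hu (Tuple.sort u i)
  unfold pOrd
  rw [bj_orderStat_refl, Fin.rev_rev, ← bj_reg_refl (bj_ha i) (bj_hb i) this.1 this.2]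
  have h : ((i.rev : ℕ) : ℝ) = n - (i : ℕ) - 1 := by
    rw [Fin.val_rev, Nat.cast_sub (by have := i.2; omega)]
    push_cast
    ring
  rw [h]
  congr 1 <;> ring

lemma bj_iInf_le {n : ℕ} (hn : 0 < n) (f : Fin n → ℝ) (c : ℝ) : (⨅ i, f i) ≤ c ↔ ∃ i, f i ≤ c := by
  have : Nonempty (Fin n) := ⟨⟨0, hn⟩⟩
  constructor
  · intro h
    obtain ⟨i, hi⟩ := exists_eq_ciInf_of_finite (f := f)
    exact ⟨i, hi.trans_le h⟩
  · rintro ⟨i, hi⟩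
    exact (ciInf_le (Set.finite_range f).bddBelow i).trans hi

/-- A measurable version of the event `M_n^+ ≤ c`. -/
def bjA (n : ℕ) (c : ℝ) : Set (Fin n → ℝ) := {u | ∃ i, bjF n i (orderStat u i) ≤ c}

/-- A measurable version of the event `M_n^- ≤ c`. -/
def bjB (n : ℕ) (c : ℝ) : Set (Fin n → ℝ) := {u | ∃ i, 1 - bjF n i (orderStat u i) ≤ c}

lemma bjA_meas (n : ℕ) (c : ℝ) : MeasurableSet (bjA n c) := by
  unfold bjA
  rw [ofPred_exists]
  exact MeasurableSet.iUnion fun i =>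
    measurableSet_le ((bjF_mono n i).measurable.comp (bj_orderStat_meas i)) measurable_const

lemma bjB_meas (n : ℕ) (c : ℝ) : MeasurableSet (bjB n c) := by
  unfold bjB
  rw [ofPred_exists]
  exact MeasurableSet.iUnion fun i =>
    measurableSet_le (measurable_const.sub
      ((bjF_mono n i).measurable.comp (bj_orderStat_meas i))) measurable_const

lemma bj_unif_refl : MeasurePreserving (fun x : ℝ => 1 - x)
    (volume.restrict (Set.Icc (0:ℝ) 1)) (volume.restrict (Set.Icc (0:ℝ) 1)) := by
  have h := (Measure.measurePreserving_sub_left (volume : Measure ℝ) 1).restrict_preimage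
    (measurableSet_Icc (a := (0:ℝ)) (b := 1))
  have e : (fun x : ℝ => 1 - x) ⁻¹' Icc 0 1 = Icc 0 1 := by
    ext x
    simp only [mem_preimage, mem_Icc]
    constructor <;> rintro ⟨h1, h2⟩ <;> constructor <;> linarith
  rwa [e] at h

lemma bj_null_refl (n : ℕ) : MeasurePreserving (fun (u : Fin n → ℝ) j => 1 - u j)
    (nullMeasure n) (nullMeasure n) :=
  measurePreserving_pi _ _ fun _ => bj_unif_refl

lemma bj_AB (n : ℕ) (c : ℝ) : (nullMeasure n).real (bjB n c) = (nullMeasure n).real (bjA n c) := by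
  have h := (bj_null_refl n).measure_preimage (bjA_meas n c).nullMeasurableSet
  unfold Measure.real
  rw [← h]
  congr 1
  apply measure_congr
  filter_upwards [bj_ae_cube n] with u hu
  have hu' : ∀ i, (fun j => 1 - u j) i ∈ Icc (0:ℝ) 1 := fun i =>
    ⟨by have := (hu i).2; simpa using this, by have := (hu i).1; simpa using this⟩
  apply propext
  show (∃ i, 1 - bjF n i (orderStat u i) ≤ c) ↔
    ∃ i, bjF n i (orderStat (fun j => 1 - u j) i) ≤ c
  simp only [← bj_pOrd_eq hu, ← bj_pOrd_eq hu']
  constructor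
  · rintro ⟨i, hi⟩
    exact ⟨i.rev, by rwa [bj_pOrd_refl hu]⟩
  · rintro ⟨i, hi⟩
    refine ⟨i.rev, ?_⟩
    rwa [← bj_pOrd_refl hu, Fin.rev_rev]

theorem berk_jones_two_sided_p_value_bounds (n : ℕ) (hn : 0 < n)
    (c : ℝ) (hc : c ∈ Set.Icc (0:ℝ) 1) :
    2 * ((nullMeasure n) {u | MnPlus u ≤ c}).toReal -
        (((nullMeasure n) {u | MnPlus u ≤ c}).toReal) ^ 2 ≤
      ((nullMeasure n) {u | Mn u ≤ c}).toReal ∧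
    ((nullMeasure n) {u | Mn u ≤ c}).toReal ≤
      2 * ((nullMeasure n) {u | MnPlus u ≤ c}).toReal := by
  have e1 : (nullMeasure n) {u | MnPlus u ≤ c} = (nullMeasure n) (bjA n c) := by
    apply measure_congr
    filter_upwards [bj_ae_cube n] with u hu
    apply propext
    show (⨅ i, pOrd u i) ≤ c ↔ ∃ i, bjF n i (orderStat u i) ≤ c
    simp only [← bj_pOrd_eq hu, bj_iInf_le hn]
  have e2 : (nullMeasure n) {u | Mn u ≤ c} = (nullMeasure n) (bjA n c ∪ bjB n c) := by
    apply measure_congr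
    filter_upwards [bj_ae_cube n] with u hu
    apply propext
    show min (⨅ i, pOrd u i) (⨅ i, (1 - pOrd u i)) ≤ c ↔
      (∃ i, bjF n i (orderStat u i) ≤ c) ∨ (∃ i, 1 - bjF n i (orderStat u i) ≤ c)
    simp only [← bj_pOrd_eq hu, min_le_iff, bj_iInf_le hn]
  rw [e1, e2]
  show 2 * (nullMeasure n).real (bjA n c) - (nullMeasure n).real (bjA n c) ^ 2 ≤
    (nullMeasure n).real (bjA n c ∪ bjB n c) ∧ (nullMeasure n).real (bjA n c ∪ bjB n c) ≤
    2 * (nullMeasure n).real (bjA n c)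
  have hAB := bj_AB n c
  refine ⟨?_, ?_⟩
  · have uA : IsUpperSet (bjA n c)ᶜ := by
      rintro u v h hu ⟨i, hi⟩
      exact hu ⟨i, (bjF_mono n i (bj_orderStat_mono i h)).trans hi⟩
    have uB : IsUpperSet (bjB n c) := by
      rintro u v h ⟨i, hi⟩
      exact ⟨i, (sub_le_sub_left (bjF_mono n i (bj_orderStat_mono i h)) 1).trans hi⟩
    have H : (nullMeasure n).real (bjA n c)ᶜ * (nullMeasure n).real (bjB n c) ≤
        (nullMeasure n).real ((bjA n c)ᶜ ∩ bjB n c) :=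
      bj_harris_set (volume.restrict (Set.Icc (0:ℝ) 1)) n _ _ (bjA_meas n c).compl
        (bjB_meas n c) uA uB
    rw [probReal_compl_eq_one_sub (bjA_meas n c), hAB] at H
    have h3 : (nullMeasure n).real (bjA n c ∪ bjB n c) =
        (nullMeasure n).real (bjA n c) + (nullMeasure n).real ((bjA n c)ᶜ ∩ bjB n c) := by
      rw [← measureReal_union _ ((bjA_meas n c).compl.inter (bjB_meas n c))]
      · congr 1
        ext x
        simp only [mem_union, mem_inter_iff, mem_compl_iff]
        tauto
      · exact disjoint_left.2 fun x hx hx' => hx'.1 hx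
    rw [h3]
    nlinarith
  · have := measureReal_union_le (μ := nullMeasure n) (bjA n c) (bjB n c)
    rw [hAB] at this
    linarith
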